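/- For every integer e ≥ 5 and each i ∈ {2,3}, there exists a finite metabelian σ-group M of order 3^{8+e}, generated by two elements x and y satisfying w^3 = 1, y^3 = s₃ s₄^2, s₂^3 = s₄ t₄^2 w^{i-1}, s₃^3 = s₅, t₃^3 = s₅^2 w^{2(i-1)}, [x^3, y] = s₄ t₄ s₅^2 w^{2(i-1)}, [x^3, s₂] = s₅, and t₅ = s₅ w^{i-1}, whose abelianization is isomorphic to (ZMod (3^e)) × (ZMod 3). -/

import Mathlib

/-- The commutator `[a,b] = a⁻¹ * b⁻¹ * a * b`. -/
def comm' {G : Type*} [Group G] (a b : G) : G := a⁻¹ * b⁻¹ * a * b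

/-- `s₂ = [y,x]` and `s_j = [s_(j-1), x]` for `j ≥ 3`. -/
def sgen {G : Type*} [Group G] (x y : G) : ℕ → G
  | 0 => 1
  | 1 => 1
  | 2 => comm' y x
  | (n + 3) => comm' (sgen x y (n + 2)) x

/-- `t_j = [s_(j-1), y]` for `j ≥ 3`. -/
def tgenD {G : Type*} [Group G] (x y : G) (j : ℕ) : G := comm' (sgen x y (j - 1)) y

/-- `t₂ = [y,x]` and `t_j = [t_(j-1), y]` for `j ≥ 3`. -/
def tgenB {G : Type*} [Group G] (x y : G) : ℕ → G
  | 0 => 1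
  | 1 => 1
  | 2 => comm' y x
  | (n + 3) => comm' (tgenB x y (n + 2)) y

/-- A σ-group: a group admitting an automorphism acting as inversion on the
abelianization. -/
def IsSigmaGroup (G : Type*) [Group G] : Prop :=
  ∃ σ : G ≃* G, ∀ g : G, Abelianization.of (σ g) = (Abelianization.of g)⁻¹

/-- A group is metabelian if its commutator subgroup is abelian, i.e. the second
derived subgroup is trivial. -/
def IsMetabelian (G : Type*) [Group G] : Prop := derivedSeries G 2 = ⊥

abbrev BB := ZMod 9 × ZMod 9 × ZMod 3

def th (r : ZMod 3) : ZMod 9 := 3 * (r.val : ZMod 9)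
def rd (p : ZMod 9) : ZMod 3 := (p.val : ZMod 3)
theorem th_add (a b : ZMod 3) : th (a + b) = th a + th b := by revert a b; decide
theorem rd_add (a b : ZMod 9) : rd (a + b) = rd a + rd b := by revert a b; decide
def lf (p : ZMod 9) : ZMod 27 := 12 * (p.val : ZMod 27)
theorem lf_add (a b : ZMod 9) : lf (a + b) = lf a + lf b := by revert a b; decide

/-- conjugation by `y⁻¹` on `B` -/
def bfun (b : BB) : BB := (b.1, 2 * b.1 - 2 * b.2.1 - 2 * th b.2.2, rd b.1 + 2 * rd b.2.1 + b.2.2)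

theorem bfun_add (a b : BB) : bfun (a + b) = bfun a + bfun b := by
  simp only [bfun, Prod.fst_add, Prod.snd_add, th_add, rd_add, Prod.mk_add_mk]
  ext <;> simp <;> ring

theorem bfun3 (a : BB) : bfun (bfun (bfun a)) = a := by
  revert a; decide +kernel

def bAut : MulAut (Multiplicative BB) where
  toFun b := .ofAdd (bfun b.toAdd)
  invFun b := .ofAdd (bfun (bfun b.toAdd))
  left_inv b := by simp [bfun3]
  right_inv b := by simp [bfun3]
  map_mul' a b := by simp [bfun_add]

theorem bAut3 : bAut ^ 3 = 1 := by
  ext1 b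
  exact congrArg Multiplicative.ofAdd (bfun3 b.toAdd)

/-- hom from `ZMod n` given by an element -/
def cyc {G : Type*} [Group G] (n : ℕ) [NeZero n] (g : G) (h : g ^ n = 1) :
    Multiplicative (ZMod n) →* G where
  toFun k := g ^ k.toAdd.val
  map_one' := by simp
  map_mul' a b := by
    rw [toAdd_mul, ZMod.val_add, ← pow_add]
    conv_rhs => rw [← Nat.div_add_mod (a.toAdd.val + b.toAdd.val) n, pow_add, pow_mul, h]
    simp

theorem cyc_one {G : Type*} [Group G] (n : ℕ) [NeZero n] (g : G) (h : g ^ n = 1) (k : ℕ):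
    cyc n g h (.ofAdd (k : ZMod n)) = g ^ k := by
  change g ^ (k : ZMod n).val = _
  rw [ZMod.val_natCast]
  conv_rhs => rw [← Nat.div_add_mod k n, pow_add, pow_mul, h]
  simp

theorem mz_pow (n : ℕ) [NeZero n] (k : Multiplicative (ZMod n)) :
    k = (.ofAdd (1 : ZMod n)) ^ k.toAdd.val := by
  rw [← ofAdd_nsmul]; simp

def yact : Multiplicative (ZMod 27) →* MulAut (Multiplicative BB) :=
  cyc 27 bAut (by rw [show 27 = 3 * 9 by rfl, pow_mul, bAut3, one_pow])

abbrev NN := Multiplicative BB ⋊[yact] Multiplicative (ZMod 27)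

def mkN (p q : ZMod 9) (r : ZMod 3) (m : ZMod 27) : NN := ⟨.ofAdd (p, q, r), .ofAdd m⟩

def nY : NN := mkN 0 0 0 1
def nC : NN := mkN 1 0 0 0

theorem yact_three (m : ZMod 27) (h : (m.val : ZMod 3) = 0) : yact (.ofAdd m) = 1 := by
  change bAut ^ m.val = 1
  obtain ⟨k, hk⟩ := (ZMod.natCast_eq_zero_iff _ _).1 h
  rw [hk, pow_mul, bAut3, one_pow]

theorem lf3 (p : ZMod 9) : ((lf p).val : ZMod 3) = 0 := by revert p; decide

def tauB : Multiplicative BB →* NN where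
  toFun b := mkN (4 * b.toAdd.1) (b.toAdd.2.1 + 3 * b.toAdd.1) (b.toAdd.2.2 + rd b.toAdd.1)
    (lf b.toAdd.1)
  map_one' := by decide
  map_mul' a b := by
    apply SemidirectProduct.ext
    · rw [SemidirectProduct.mul_left]
      simp only [mkN, yact_three _ (lf3 _), MulAut.one_apply, toAdd_mul, Prod.fst_add, Prod.snd_add,
        rd_add, ← ofAdd_add]
      congr 1
      ext <;> simp <;> ring
    · rw [SemidirectProduct.mul_right]
      simp only [mkN, toAdd_mul, Prod.fst_add, lf_add, ofAdd_add]

def sigB : Multiplicative BB →* NN where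
  toFun b := mkN b.toAdd.1 (2 * b.toAdd.1 - b.toAdd.2.1)
    (rd b.toAdd.1 + 2 * rd b.toAdd.2.1 + b.toAdd.2.2)
    (lf (- b.toAdd.1))
  map_one' := by decide
  map_mul' a b := by
    apply SemidirectProduct.ext
    · rw [SemidirectProduct.mul_left]
      simp only [mkN, yact_three _ (lf3 _), MulAut.one_apply, toAdd_mul, Prod.fst_add, Prod.snd_add,
        rd_add, ← ofAdd_add]
      congr 1
      ext <;> simp <;> ring
    · rw [SemidirectProduct.mul_right]
      simp only [mkN, toAdd_mul, Prod.fst_add, neg_add, lf_add, ofAdd_add]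

set_option maxRecDepth 10000 in
theorem yc27 : (nY * nC) ^ 27 = 1 := by decide +kernel

theorem y27 : (nY⁻¹) ^ 27 = 1 := by decide +kernel

theorem compat_gen (f : Multiplicative BB →* NN) (g : NN) (hg : g ^ 27 = 1)
    (h : ∀ b, f (bAut b) = g * f b * g⁻¹) (k : Multiplicative (ZMod 27)) :
    f.comp (yact k).toMonoidHom = (MulAut.conj (cyc 27 g hg k)).toMonoidHom.comp f := by
  refine MonoidHom.ext fun b => ?_
  change f ((bAut ^ k.toAdd.val) b) = MulAut.conj (g ^ k.toAdd.val) (f b)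
  generalize k.toAdd.val = j
  induction j generalizing b with
  | zero => simp
  | succ j ih =>
    rw [pow_succ, MulAut.mul_apply, ih, h]
    simp [pow_succ, mul_assoc]

theorem tau_h : ∀ b, tauB (bAut b) = (nY * nC) * tauB b * (nY * nC)⁻¹ := by
  have : ∀ b : BB, tauB (bAut (.ofAdd b)) = (nY * nC) * tauB (.ofAdd b) * (nY * nC)⁻¹ := by
    decide +kernel
  intro b
  rw [← ofAdd_toAdd b]
  exact this _

theorem sig_h : ∀ b, sigB (bAut b) = nY⁻¹ * sigB b * (nY⁻¹)⁻¹ := by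
  have : ∀ b : BB, sigB (bAut (.ofAdd b)) = nY⁻¹ * sigB (.ofAdd b) * (nY⁻¹)⁻¹ := by
    decide +kernel
  intro b
  rw [← ofAdd_toAdd b]
  exact this _

def tau0 : NN →* NN := SemidirectProduct.lift tauB (cyc 27 (nY * nC) yc27)
  (compat_gen _ _ _ tau_h)

def sig0 : NN →* NN := SemidirectProduct.lift sigB (cyc 27 (nY⁻¹) y27)
  (compat_gen _ _ _ sig_h)

theorem genN (S : Subgroup NN) (hy : nY ∈ S) (hc : nC ∈ S) : S = ⊤ := by
  have hYc : mkN 0 1 0 0 ∈ S := by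
    have : mkN 0 1 0 0 = nC⁻¹ * nY⁻¹ * nC * nY := by decide +kernel
    rw [this]
    exact S.mul_mem (S.mul_mem (S.mul_mem (S.inv_mem hc) (S.inv_mem hy)) hc) hy
  have hD : mkN 0 0 1 0 ∈ S := by
    have : mkN 0 0 1 0 = (mkN 0 1 0 0)⁻¹ * nY⁻¹ * (mkN 0 1 0 0) * nY := by decide +kernel
    rw [this]
    exact S.mul_mem (S.mul_mem (S.mul_mem (S.inv_mem hYc) (S.inv_mem hy)) hYc) hy
  rw [eq_top_iff]
  rintro n -
  have hB : ∀ b : BB, SemidirectProduct.inl (.ofAdd b) =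
      nC ^ b.1.val * (mkN 0 1 0 0) ^ b.2.1.val * (mkN 0 0 1 0) ^ b.2.2.val := by
    decide +kernel
  have hR : ∀ m : ZMod 27, SemidirectProduct.inr (.ofAdd m) = nY ^ m.val := by
    decide +kernel
  rw [← SemidirectProduct.inl_left_mul_inr_right n]
  have h1 := hB n.left.toAdd
  have h2 := hR n.right.toAdd
  rw [ofAdd_toAdd] at h1 h2
  rw [h1, h2]
  exact S.mul_mem (S.mul_mem (S.mul_mem (S.pow_mem hc _) (S.pow_mem hYc _)) (S.pow_mem hD _))
    (S.pow_mem hy _)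

theorem homN {P : Type*} [Group P] (f g : NN →* P) (hy : f nY = g nY) (hc : f nC = g nC) :
    f = g := by
  have := genN (f.eqLocus g) hy hc
  ext1 n
  have h : n ∈ f.eqLocus g := by rw [this]; trivial
  exact h

theorem tau9y : tau0 (tau0 (tau0 (tau0 (tau0 (tau0 (tau0 (tau0 (tau0 nY)))))))) = nY := by
  decide +kernel
theorem tau9c : tau0 (tau0 (tau0 (tau0 (tau0 (tau0 (tau0 (tau0 (tau0 nC)))))))) = nC := by
  decide +kernel
theorem tau9 (n : NN) : tau0 (tau0 (tau0 (tau0 (tau0 (tau0 (tau0 (tau0 (tau0 n)))))))) = n := by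
  have h := DFunLike.congr_fun (homN (tau0.comp (tau0.comp (tau0.comp (tau0.comp (tau0.comp
    (tau0.comp (tau0.comp (tau0.comp tau0)))))))) (MonoidHom.id _)
    (by simp only [MonoidHom.comp_apply, MonoidHom.id_apply]; exact tau9y)
    (by simp only [MonoidHom.comp_apply, MonoidHom.id_apply]; exact tau9c)) n
  simpa only [MonoidHom.comp_apply, MonoidHom.id_apply] using h

theorem tau0_bij : Function.Bijective tau0 := by
  constructor
  · intro a b h
    rw [← tau9 a, h, tau9 b]
  · intro n
    exact ⟨_, tau9 n⟩

/-- conjugation by x: n ↦ x⁻¹ n x -/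
noncomputable def tau : MulAut NN := MulEquiv.ofBijective tau0 tau0_bij

theorem tau_apply (n : NN) : tau n = tau0 n := rfl

theorem tau_pow9 : tau ^ 9 = 1 := by
  refine MulEquiv.ext fun n => ?_
  simp only [pow_succ, pow_zero, one_mul, MulAut.mul_apply, MulAut.one_apply, tau_apply]
  exact tau9 n

theorem tau_sig (n : NN) : tau0 (sig0 (tau0 n)) = sig0 n := by
  have h := DFunLike.congr_fun (homN (tau0.comp (sig0.comp tau0)) sig0
    (by simp only [MonoidHom.comp_apply]; decide +kernel)
    (by simp only [MonoidHom.comp_apply]; decide +kernel)) n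
  simpa only [MonoidHom.comp_apply] using h

def nW : NN := mkN 0 (-3) 0 (-9)
theorem tau_W : tau0 nW = nW := by decide +kernel
theorem sig_W : sig0 nW = nW⁻¹ := by decide +kernel
theorem W_pow : nW ^ 3 = 1 := by decide +kernel
theorem W_comm (n : NN) : nW * n = n * nW := by
  have := DFunLike.congr_fun (homN (MulAut.conj nW).toMonoidHom (MonoidHom.id _)
    (by decide +kernel) (by decide +kernel)) n
  exact mul_inv_eq_iff_eq_mul.1 this
theorem rel1 : nY⁻¹ * tau0 nY = nC := by decide +kernel

theorem rel_s3 : nC⁻¹ * tau0 nC = mkN 3 3 1 12 := by decide +kernel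
theorem rel_s4 : (mkN 3 3 1 12)⁻¹ * tau0 (mkN 3 3 1 12) = mkN 3 3 1 9 := by decide +kernel
theorem rel_s5 : (mkN 3 3 1 9)⁻¹ * tau0 (mkN 3 3 1 9) = mkN 0 0 0 9 := by decide +kernel
theorem rel_t3 : nC⁻¹ * nY⁻¹ * nC * nY = mkN 0 1 0 0 := by decide +kernel
theorem rel_t4 : (mkN 0 1 0 0)⁻¹ * nY⁻¹ * mkN 0 1 0 0 * nY = mkN 0 0 1 0 := by decide +kernel
theorem rel_t5 : (mkN 0 0 1 0)⁻¹ * nY⁻¹ * mkN 0 0 1 0 * nY = mkN 0 (-3) 0 0 := by decide +kernel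
theorem R1 : nY ^ 3 = mkN 3 3 1 12 * mkN 3 3 1 9 ^ 2 := by decide +kernel
theorem R2 : nC ^ 3 = mkN 3 3 1 9 * mkN 0 0 1 0 ^ 2 * nW := by decide +kernel
theorem R3 : mkN 3 3 1 12 ^ 3 = mkN 0 0 0 9 := by decide +kernel
theorem R4 : mkN 0 1 0 0 ^ 3 = mkN 0 0 0 9 ^ 2 * nW ^ 2 := by decide +kernel
theorem R5 : tau0 (tau0 (tau0 nY⁻¹)) * nY = mkN 3 3 1 9 * mkN 0 0 1 0 * mkN 0 0 0 9 ^ 2 * nW ^ 2 := by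
  decide +kernel
theorem R6 : tau0 (tau0 (tau0 nC⁻¹)) * nC = mkN 0 0 0 9 := by decide +kernel
theorem R7 : mkN 0 (-3) 0 0 = mkN 0 0 0 9 * nW := by decide +kernel
theorem sig_y : sig0 nY = nY⁻¹ := by decide +kernel
theorem tau_y : tau0 nY = nY * nC := by decide +kernel
theorem W_ne (j : ℕ) (hj : j = 1 ∨ j = 2) : nW ^ j ≠ 1 := by
  rcases hj with rfl | rfl <;> decide +kernel

/-- projection of N to ZMod 3 -/
def prN : NN →* Multiplicative (ZMod 3) where
  toFun n := .ofAdd (n.right.toAdd.val : ZMod 3)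
  map_one' := by decide
  map_mul' a b := by
    have : ∀ a b : ZMod 27, (((a + b).val : ℕ) : ZMod 3) = (a.val : ZMod 3) + (b.val : ZMod 3) := by
      decide +kernel
    rw [SemidirectProduct.mul_right, toAdd_mul, this, ofAdd_add]

theorem prN_tau : prN.comp tau0 = prN := by
  apply homN
  · rw [MonoidHom.comp_apply]; decide +kernel
  · rw [MonoidHom.comp_apply]; decide +kernel
theorem prN_W : prN nW = 1 := by decide +kernel
theorem prN_Y : prN nY = .ofAdd 1 := by decide +kernel

theorem cardN : Nat.card NN = 3 ^ 8 := by
  rw [SemidirectProduct.card]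
  simp [Nat.card_eq_fintype_card]

theorem N_comm (a b : NN) (ha : prN a = 1) (hb : prN b = 1) : a * b = b * a := by
  have ha' : yact a.right = 1 := yact_three a.right.toAdd (Multiplicative.ofAdd.injective ha)
  have hb' : yact b.right = 1 := yact_three b.right.toAdd (Multiplicative.ofAdd.injective hb)
  apply SemidirectProduct.ext
  · rw [SemidirectProduct.mul_left, SemidirectProduct.mul_left, ha', hb']
    exact mul_comm _ _
  · exact mul_comm _ _

theorem dvd9 (e : ℕ) (he : 5 ≤ e) : 9 ∣ 3 ^ e := by
  rw [show 9 = 3 ^ 2 by rfl]; exact pow_dvd_pow 3 (by omega)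

theorem tauinv_pow (e : ℕ) (he : 5 ≤ e) : (tau⁻¹) ^ (3 ^ e) = 1 := by
  obtain ⟨k, hk⟩ := dvd9 e he
  rw [hk, pow_mul, inv_pow, tau_pow9]; simp

noncomputable def phi (e : ℕ) (he : 5 ≤ e) : Multiplicative (ZMod (3 ^ (e + 1))) →* MulAut NN :=
  cyc (3 ^ (e + 1)) tau⁻¹ (tauinv_pow (e + 1) (by omega))

abbrev HH (e : ℕ) (he : 5 ≤ e) := NN ⋊[phi e he] Multiplicative (ZMod (3 ^ (e + 1)))

noncomputable def hx (e : ℕ) (he : 5 ≤ e) : HH e he := SemidirectProduct.inr (.ofAdd 1)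

theorem hx_pow (e : ℕ) (he : 5 ≤ e) (k : ℕ) :
    hx e he ^ k = SemidirectProduct.inr (.ofAdd (k : ZMod (3 ^ (e + 1)))) := by
  rw [hx, ← map_pow, ← ofAdd_nsmul]; simp

theorem phi_one (e : ℕ) (he : 5 ≤ e) : phi e he (.ofAdd 1) = tau⁻¹ := by
  have := cyc_one (3 ^ (e + 1)) tau⁻¹ (tauinv_pow (e + 1) (by omega)) 1
  rw [Nat.cast_one, pow_one] at this
  exact this

theorem phi_3e (e : ℕ) (he : 5 ≤ e) : phi e he (.ofAdd ((3 ^ e : ℕ) : ZMod (3 ^ (e + 1)))) = 1 := by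
  have := cyc_one (3 ^ (e + 1)) tau⁻¹ (tauinv_pow (e + 1) (by omega)) (3 ^ e)
  rw [tauinv_pow e he] at this
  exact this

theorem conj_x (e : ℕ) (he : 5 ≤ e) (n : NN) :
    (SemidirectProduct.inl n : HH e he) * hx e he = hx e he * SemidirectProduct.inl (tau0 n) := by
  have h := SemidirectProduct.inl_aut (φ := phi e he) (.ofAdd 1) (tau0 n)
  rw [phi_one, ← tau_apply, MulAut.inv_apply_self] at h
  rw [h, hx, tau_apply, map_inv, inv_mul_cancel_right]

noncomputable def hz (e : ℕ) (he : 5 ≤ e) (j : ℕ) : HH e he :=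
  (SemidirectProduct.inl (nW ^ j))⁻¹ * hx e he ^ (3 ^ e)

theorem hz_central (e : ℕ) (he : 5 ≤ e) (j : ℕ) : hz e he j ∈ Subgroup.center (HH e he) := by
  apply Subgroup.mul_mem
  · apply Subgroup.inv_mem
    rw [map_pow]
    apply Subgroup.pow_mem
    rw [Subgroup.mem_center_iff]
    have h1 : ∀ n : NN, (SemidirectProduct.inl n : HH e he) * SemidirectProduct.inl nW =
        SemidirectProduct.inl nW * SemidirectProduct.inl n := by
      intro n; rw [← map_mul, ← map_mul]; exact congrArg _ (W_comm n).symm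
    have h2 : ∀ k, Commute (SemidirectProduct.inr k : HH e he) (SemidirectProduct.inl nW) := by
      intro k
      rw [mz_pow _ k, map_pow]
      apply Commute.pow_left
      have := conj_x e he nW
      rw [tau_W] at this
      rw [hx] at this
      rw [commute_iff_eq]
      exact this.symm
    intro g
    have h3 := (show Commute _ _ from h1 g.left).mul_left (h2 g.right)
    rw [SemidirectProduct.inl_left_mul_inr_right g] at h3
    exact h3
  · rw [Subgroup.mem_center_iff]
    intro g
    rw [hx_pow]
    apply SemidirectProduct.ext
    · rw [SemidirectProduct.mul_left, SemidirectProduct.mul_left, SemidirectProduct.right_inr,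
        SemidirectProduct.left_inr, phi_3e]
      simp
    · rw [SemidirectProduct.mul_right, SemidirectProduct.mul_right]
      exact mul_comm _ _

instance hz_normal (e : ℕ) (he : 5 ≤ e) (j : ℕ) : (Subgroup.zpowers (hz e he j)).Normal := by
  constructor
  intro n hn g
  have : n ∈ Subgroup.center (HH e he) :=
    (Subgroup.zpowers_le.2 (hz_central e he j)) hn
  rw [Subgroup.mem_center_iff.1 this g]
  simpa using hn

theorem hz_pow3 (e : ℕ) (he : 5 ≤ e) (j : ℕ) : hz e he j ^ 3 = 1 := by
  have hc : Commute ((SemidirectProduct.inl (nW ^ j))⁻¹ : HH e he) (hx e he ^ (3 ^ e)) := by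
    have h2 := Subgroup.mem_center_iff.1 (hz_central e he j) ((SemidirectProduct.inl (nW ^ j))⁻¹)
    rw [hz, mul_assoc] at h2
    exact mul_left_cancel h2
  rw [hz, hc.mul_pow, inv_pow, ← map_pow, ← pow_mul, mul_comm j 3, pow_mul, W_pow, one_pow,
    map_one, inv_one, one_mul, ← pow_mul, ← pow_succ, hx_pow]
  simp

theorem hz_right (e : ℕ) (he : 5 ≤ e) (j : ℕ) :
    (hz e he j).right = .ofAdd ((3 ^ e : ℕ) : ZMod (3 ^ (e + 1))) := by
  rw [hz, hx_pow, SemidirectProduct.mul_right, SemidirectProduct.right_inr, ← map_inv,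
    SemidirectProduct.right_inl, one_mul]

theorem hz_order (e : ℕ) (he : 5 ≤ e) (j : ℕ) : orderOf (hz e he j) = 3 := by
  have : Fact (Nat.Prime 3) := ⟨Nat.prime_three⟩
  apply orderOf_eq_prime (hz_pow3 e he j)
  intro h
  have h1 := hz_right e he j
  rw [h, SemidirectProduct.one_right] at h1
  have h2 : ((3 ^ e : ℕ) : ZMod (3 ^ (e + 1))) = 0 := (Multiplicative.ofAdd.injective h1).symm
  rw [ZMod.natCast_eq_zero_iff, Nat.pow_dvd_pow_iff_le_right (by norm_num)] at h2
  omega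

abbrev MM (e : ℕ) (he : 5 ≤ e) (j : ℕ) := HH e he ⧸ Subgroup.zpowers (hz e he j)

theorem cardH (e : ℕ) (he : 5 ≤ e) : Nat.card (HH e he) = 3 ^ 8 * 3 ^ (e + 1) := by
  rw [SemidirectProduct.card, cardN]
  simp

theorem cardM (e : ℕ) (he : 5 ≤ e) (j : ℕ) : Nat.card (MM e he j) = 3 ^ (8 + e) := by
  have h := Subgroup.card_eq_card_quotient_mul_card_subgroup (Subgroup.zpowers (hz e he j))
  rw [Nat.card_zpowers, hz_order, cardH] at h
  have : 3 ^ 8 * 3 ^ (e + 1) = 3 ^ (8 + e) * 3 := by ring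
  rw [this] at h
  exact (Nat.eq_of_mul_eq_mul_right (by norm_num) h).symm

noncomputable def mx (e : ℕ) (he : 5 ≤ e) (j : ℕ) : MM e he j := QuotientGroup.mk' _ (hx e he)

noncomputable def iN (e : ℕ) (he : 5 ≤ e) (j : ℕ) : NN →* MM e he j :=
  (QuotientGroup.mk' _).comp SemidirectProduct.inl

theorem iN_x (e : ℕ) (he : 5 ≤ e) (j : ℕ) (n : NN) :
    iN e he j n * mx e he j = mx e he j * iN e he j (tau0 n) := by
  have := congrArg (QuotientGroup.mk' (Subgroup.zpowers (hz e he j))) (conj_x e he n)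
  rw [map_mul, map_mul] at this
  exact this

theorem mx_pow (e : ℕ) (he : 5 ≤ e) (j : ℕ) : mx e he j ^ 3 ^ e = iN e he j (nW ^ j) := by
  have h : QuotientGroup.mk' (Subgroup.zpowers (hz e he j)) (hz e he j) = 1 := by
    rw [← MonoidHom.mem_ker, QuotientGroup.ker_mk']
    exact Subgroup.mem_zpowers _
  have h0 : ∀ (F : HH e he →* MM e he j), F (hz e he j) =
      (F (SemidirectProduct.inl (nW ^ j)))⁻¹ * F (hx e he) ^ (3 ^ e) := by
    intro F
    have h1 : F (hz e he j) = F ((SemidirectProduct.inl (nW ^ j))⁻¹ * hx e he ^ (3 ^ e)) := rfl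
    rw [h1, map_mul, map_inv, map_pow F]
  rw [h0] at h
  exact (inv_mul_eq_one.1 h).symm

theorem comm_x (e : ℕ) (he : 5 ≤ e) (j : ℕ) (n : NN) :
    comm' (iN e he j n) (mx e he j) = iN e he j (n⁻¹ * tau0 n) := by
  rw [comm', mul_assoc, iN_x, map_mul, map_inv]
  group

theorem comm_N (e : ℕ) (he : 5 ≤ e) (j : ℕ) (n m : NN) :
    comm' (iN e he j n) (iN e he j m) = iN e he j (n⁻¹ * m⁻¹ * n * m) := by
  simp only [comm', map_mul, map_inv]

theorem comm_x3 (e : ℕ) (he : 5 ≤ e) (j : ℕ) (n : NN) :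
    comm' (mx e he j ^ 3) (iN e he j n) = iN e he j (tau0 (tau0 (tau0 n⁻¹)) * n) := by
  have h : iN e he j n⁻¹ * mx e he j ^ 3 = mx e he j ^ 3 * iN e he j (tau0 (tau0 (tau0 n⁻¹))) := by
    have h3 : mx e he j ^ 3 = mx e he j * mx e he j * mx e he j := by
      rw [pow_succ (mx e he j) 2, pow_two]
    rw [h3, ← mul_assoc, ← mul_assoc, iN_x, mul_assoc (mx e he j), iN_x, ← mul_assoc, mul_assoc,
      iN_x, ← mul_assoc]
  rw [comm', ← map_inv, mul_assoc _ (iN e he j n⁻¹), h, map_mul]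
  group

theorem genM (e : ℕ) (he : 5 ≤ e) (j : ℕ) :
    Subgroup.closure {mx e he j, iN e he j nY} = ⊤ := by
  set S := Subgroup.closure {mx e he j, iN e he j nY} with hS
  have hX : mx e he j ∈ S := Subgroup.subset_closure (by simp)
  have hY : iN e he j nY ∈ S := Subgroup.subset_closure (by simp)
  have hC : iN e he j nC ∈ S := by
    rw [← rel1, ← comm_x, comm']
    exact S.mul_mem (S.mul_mem (S.mul_mem (S.inv_mem hY) (S.inv_mem hX)) hY) hX
  have hN : ∀ n, iN e he j n ∈ S := by
    intro n
    have := genN (S.comap (iN e he j)) hY hC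
    have h : n ∈ S.comap (iN e he j) := by rw [this]; trivial
    exact h
  rw [eq_top_iff]
  rintro g -
  obtain ⟨h, rfl⟩ := QuotientGroup.mk'_surjective _ g
  rw [← SemidirectProduct.inl_left_mul_inr_right h, map_mul]
  apply S.mul_mem (hN _)
  rw [mz_pow _ h.right, map_pow, map_pow]
  exact S.pow_mem hX _

theorem sig_tauinv (n : NN) : sig0 (tau⁻¹ n) = tau (sig0 n) := by
  have h := tau_sig (tau⁻¹ n)
  rw [← tau_apply (tau⁻¹ n), MulAut.apply_inv_self] at h
  rw [tau_apply, h]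

theorem sig_compat (e : ℕ) (he : 5 ≤ e) (g : Multiplicative (ZMod (3 ^ (e + 1)))) :
    sig0.comp (phi e he g).toMonoidHom =
      (phi e he (invMonoidHom g)).toMonoidHom.comp sig0 := by
  refine MonoidHom.ext fun n => ?_
  change sig0 (phi e he g n) = phi e he g⁻¹ (sig0 n)
  rw [mz_pow _ g, map_inv, map_pow, phi_one]
  generalize g.toAdd.val = v
  rw [inv_pow, inv_inv]
  induction v with
  | zero => simp
  | succ v ih =>
    rw [pow_succ, mul_inv_rev, MulAut.mul_apply, sig_tauinv, ih, ← MulAut.mul_apply, ← pow_succ',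
      pow_succ]

noncomputable def sigH (e : ℕ) (he : 5 ≤ e) : HH e he →* HH e he :=
  SemidirectProduct.map sig0 invMonoidHom (sig_compat e he)

theorem sigH_x (e : ℕ) (he : 5 ≤ e) : sigH e he (hx e he) = (hx e he)⁻¹ := by
  rw [sigH, hx, SemidirectProduct.map_inr, ← map_inv]; rfl

theorem sigH_N (e : ℕ) (he : 5 ≤ e) (n : NN) :
    sigH e he (SemidirectProduct.inl n) = SemidirectProduct.inl (sig0 n) := by
  rw [sigH, SemidirectProduct.map_inl]

theorem sigH_z (e : ℕ) (he : 5 ≤ e) (j : ℕ) : sigH e he (hz e he j) = (hz e he j)⁻¹ := by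
  have h2 := Subgroup.mem_center_iff.1 (hz_central e he j) (SemidirectProduct.inl (nW ^ j))
  rw [hz] at h2 ⊢
  rw [map_mul, map_inv, sigH_N, map_pow sig0, sig_W, map_pow (sigH e he), sigH_x, mul_inv_rev,
    inv_inv]
  rw [mul_inv_cancel_left, mul_assoc, eq_inv_mul_iff_mul_eq] at h2
  rw [inv_pow, map_inv, inv_inv, inv_pow]
  have h3 : Commute (SemidirectProduct.inl (nW ^ j)) (hx e he ^ 3 ^ e) := h2
  exact h3.inv_right.eq

noncomputable def sigM (e : ℕ) (he : 5 ≤ e) (j : ℕ) : MM e he j →* MM e he j :=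
  QuotientGroup.map _ _ (sigH e he) (by
    rw [Subgroup.zpowers_le, Subgroup.mem_comap, sigH_z]
    exact Subgroup.inv_mem _ (Subgroup.mem_zpowers _))

theorem sigM_x (e : ℕ) (he : 5 ≤ e) (j : ℕ) : sigM e he j (mx e he j) = (mx e he j)⁻¹ := by
  change QuotientGroup.mk' _ (sigH e he (hx e he)) = _
  rw [sigH_x, map_inv]; rfl

theorem sigM_y (e : ℕ) (he : 5 ≤ e) (j : ℕ) :
    sigM e he j (iN e he j nY) = (iN e he j nY)⁻¹ := by
  change QuotientGroup.mk' _ (sigH e he (SemidirectProduct.inl nY)) = _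
  rw [sigH_N, sig_y, map_inv, map_inv]; rfl

theorem homM {P : Type*} [Monoid P] (e : ℕ) (he : 5 ≤ e) (j : ℕ) (f g : MM e he j →* P)
    (hx : f (mx e he j) = g (mx e he j)) (hy : f (iN e he j nY) = g (iN e he j nY)) : f = g := by
  apply MonoidHom.eq_of_eqOn_dense (genM e he j)
  rintro a (rfl | rfl)
  · exact hx
  · exact hy

theorem sigmaM (e : ℕ) (he : 5 ≤ e) (j : ℕ) : IsSigmaGroup (MM e he j) := by
  have h : (sigM e he j).comp (sigM e he j) = MonoidHom.id _ := by
    apply homM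
    · rw [MonoidHom.comp_apply, sigM_x, map_inv, sigM_x, inv_inv]; rfl
    · rw [MonoidHom.comp_apply, sigM_y, map_inv, sigM_y, inv_inv]; rfl
  refine ⟨MonoidHom.toMulEquiv _ _ h h, ?_⟩
  have h2 : Abelianization.of.comp (sigM e he j) = invMonoidHom.comp Abelianization.of := by
    apply homM
    · rw [MonoidHom.comp_apply, sigM_x, map_inv]; rfl
    · rw [MonoidHom.comp_apply, sigM_y, map_inv]; rfl
  intro g
  exact DFunLike.congr_fun h2 g

/-- projection to the abelianization -/
theorem redP (e : ℕ) : 3 ^ e ∣ 3 ^ (e + 1) := pow_dvd_pow 3 (by omega)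

noncomputable def prK (e : ℕ) : Multiplicative (ZMod (3 ^ (e + 1))) →* Multiplicative (ZMod (3 ^ e)) :=
  AddMonoidHom.toMultiplicative (ZMod.castHom (redP e) (ZMod (3 ^ e))).toAddMonoidHom

theorem pr_compat (e : ℕ) (he : 5 ≤ e) (g : Multiplicative (ZMod (3 ^ (e + 1)))) (n : NN) :
    prN (phi e he g n) = prN n := by
  have h1 : ∀ n, prN (tau⁻¹ n) = prN n := by
    intro n
    have := DFunLike.congr_fun prN_tau (tau⁻¹ n)
    rw [MonoidHom.comp_apply, ← tau_apply, MulAut.apply_inv_self] at this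
    exact this.symm
  rw [mz_pow _ g, map_pow, phi_one]
  generalize g.toAdd.val = v
  induction v with
  | zero => simp
  | succ v ih => rw [pow_succ', MulAut.mul_apply, h1, ih]

noncomputable def prH (e : ℕ) (he : 5 ≤ e) :
    HH e he →* Multiplicative (ZMod (3 ^ e)) × Multiplicative (ZMod 3) where
  toFun h := (prK e h.right, prN h.left)
  map_one' := by simp
  map_mul' a b := by
    rw [SemidirectProduct.mul_left, SemidirectProduct.mul_right, map_mul, map_mul, pr_compat]
    rfl

theorem prH_z (e : ℕ) (he : 5 ≤ e) (j : ℕ) : prH e he (hz e he j) = 1 := by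
  rw [hz, map_mul, map_inv, map_pow, map_pow, hx_pow]
  have h1 : prH e he (SemidirectProduct.inl nW) = 1 := by
    change (prK e 1, prN nW) = 1
    rw [map_one, prN_W]; rfl
  have h2 : prH e he (SemidirectProduct.inr (.ofAdd ((3 ^ e : ℕ) : ZMod (3 ^ (e + 1))))) = 1 := by
    change (prK e _, prN 1) = 1
    rw [map_one]
    change (Multiplicative.ofAdd ((ZMod.castHom (redP e) (ZMod (3 ^ e)))
      ((3 ^ e : ℕ) : ZMod (3 ^ (e + 1)))), 1) = 1
    rw [map_natCast, ZMod.natCast_self]; rfl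
  rw [h1, h2]; simp

noncomputable def prM (e : ℕ) (he : 5 ≤ e) (j : ℕ) :
    MM e he j →* Multiplicative (ZMod (3 ^ e)) × Multiplicative (ZMod 3) :=
  QuotientGroup.lift _ (prH e he) (by
    have : Subgroup.zpowers (hz e he j) ≤ (prH e he).ker := by
      rw [Subgroup.zpowers_le, MonoidHom.mem_ker, prH_z]
    exact this)

theorem prM_x (e : ℕ) (he : 5 ≤ e) (j : ℕ) : prM e he j (mx e he j) = (.ofAdd 1, 1) := by
  change (prK e (.ofAdd 1), prN 1) = _
  rw [map_one prN]
  change (Multiplicative.ofAdd ((ZMod.castHom (redP e) (ZMod (3 ^ e))) 1), 1) = _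
  rw [map_one]

theorem prM_y (e : ℕ) (he : 5 ≤ e) (j : ℕ) : prM e he j (iN e he j nY) = (1, .ofAdd 1) := by
  change (prK e 1, prN nY) = _
  rw [map_one, prN_Y]

theorem prH_phi (e : ℕ) (he : 5 ≤ e) (k : Multiplicative (ZMod (3 ^ (e + 1)))) (h : prK e k = 1) :
    phi e he k = 1 := by
  have h1 : (ZMod.castHom (redP e) (ZMod (3 ^ e))) k.toAdd = 0 := h
  rw [← ZMod.natCast_zmod_val k.toAdd, map_natCast, ZMod.natCast_eq_zero_iff] at h1
  obtain ⟨v, hv⟩ := h1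
  rw [mz_pow _ k, map_pow, phi_one, hv, pow_mul, tauinv_pow e he, one_pow]

theorem metaM (e : ℕ) (he : 5 ≤ e) (j : ℕ) : IsMetabelian (MM e he j) := by
  have hle : commutator (MM e he j) ≤ (prM e he j).ker := Abelianization.commutator_subset_ker _
  have hc : ∀ a ∈ (prM e he j).ker, ∀ b ∈ (prM e he j).ker, a * b = b * a := by
    intro a ha b hb
    obtain ⟨a, rfl⟩ := QuotientGroup.mk'_surjective _ a
    obtain ⟨b, rfl⟩ := QuotientGroup.mk'_surjective _ b
    have ha1 : (prK e a.right, prN a.left) = 1 := ha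
    have hb1 : (prK e b.right, prN b.left) = 1 := hb
    rw [Prod.mk_eq_one] at ha1 hb1
    rw [← map_mul, ← map_mul]
    congr 1
    apply SemidirectProduct.ext
    · rw [SemidirectProduct.mul_left, SemidirectProduct.mul_left, prH_phi e he _ ha1.1,
        prH_phi e he _ hb1.1]
      exact N_comm _ _ ha1.2 hb1.2
    · exact mul_comm _ _
  rw [IsMetabelian, show (2 : ℕ) = 1 + 1 by rfl, derivedSeries_succ, derivedSeries_one,
    Subgroup.commutator_eq_bot_iff_le_centralizer]
  intro a ha
  rw [Subgroup.mem_centralizer_iff]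
  intro b hb
  exact hc b (hle hb) a (hle ha)

theorem abM (e : ℕ) (he : 5 ≤ e) (j : ℕ)
    (h1 : (Abelianization.of (mx e he j)) ^ 3 ^ e = 1)
    (h2 : (Abelianization.of (iN e he j nY)) ^ 3 = 1) :
    Nonempty (Abelianization (MM e he j) ≃* Multiplicative (ZMod (3 ^ e) × ZMod 3)) := by
  let F : Abelianization (MM e he j) →* Multiplicative (ZMod (3 ^ e)) × Multiplicative (ZMod 3) :=
    Abelianization.lift (prM e he j)
  let G : Multiplicative (ZMod (3 ^ e)) × Multiplicative (ZMod 3) →* Abelianization (MM e he j) :=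
    (cyc (3 ^ e) _ h1).coprod (cyc 3 _ h2)
  have c1 : cyc (3 ^ e) _ h1 (.ofAdd 1) = Abelianization.of (mx e he j) := by
    have := cyc_one (3 ^ e) _ h1 1
    rwa [Nat.cast_one, pow_one] at this
  have c2 : cyc 3 _ h2 (.ofAdd 1) = Abelianization.of (iN e he j nY) := by
    have := cyc_one 3 _ h2 1
    rwa [Nat.cast_one, pow_one] at this
  have fx : F (Abelianization.of (mx e he j)) = (.ofAdd 1, 1) := by
    rw [← prM_x e he j]; exact Abelianization.lift_apply_of _ _
  have fy : F (Abelianization.of (iN e he j nY)) = (1, .ofAdd 1) := by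
    rw [← prM_y e he j]; exact Abelianization.lift_apply_of _ _
  have hGF : G.comp F = MonoidHom.id _ := by
    apply Abelianization.hom_ext
    apply homM
    · change G (F (Abelianization.of _)) = Abelianization.of _
      rw [fx, MonoidHom.coprod_apply, c1, map_one, mul_one]
    · change G (F (Abelianization.of _)) = Abelianization.of _
      rw [fy, MonoidHom.coprod_apply, c2, map_one, one_mul]
  have hFG : F.comp G = MonoidHom.id _ := by
    refine MonoidHom.ext fun ⟨a, b⟩ => ?_
    rw [MonoidHom.comp_apply, MonoidHom.coprod_apply, mz_pow _ a, mz_pow _ b, map_pow, map_pow,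
      c1, c2, map_mul, map_pow, map_pow, fx, fy]
    simp
  exact ⟨(MonoidHom.toMulEquiv F G hGF hFG).trans (MulEquiv.prodMultiplicative _ _).symm⟩

theorem main_aux (e i : ℕ) (he : 5 ≤ e) (hi : i = 2 ∨ i = 3) :
    ∃ (M : Type) (_ : Group M) (_ : Finite M) (x y : M),
      Subgroup.closure {x, y} = ⊤ ∧
      Nat.card M = 3 ^ (8 + e) ∧
      IsMetabelian M ∧
      IsSigmaGroup M ∧
      (x ^ 3 ^ e) ^ 3 = 1 ∧
      y ^ 3 = sgen x y 3 * sgen x y 4 ^ 2 ∧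
      sgen x y 2 ^ 3 = sgen x y 4 * tgenB x y 4 ^ 2 * (x ^ 3 ^ e) ^ (i - 1) ∧
      sgen x y 3 ^ 3 = sgen x y 5 ∧
      tgenB x y 3 ^ 3 = sgen x y 5 ^ 2 * (x ^ 3 ^ e) ^ (2 * (i - 1)) ∧
      comm' (x ^ 3) y = sgen x y 4 * tgenB x y 4 * sgen x y 5 ^ 2 * (x ^ 3 ^ e) ^ (2 * (i - 1)) ∧
      comm' (x ^ 3) (sgen x y 2) = sgen x y 5 ∧
      tgenB x y 5 = sgen x y 5 * (x ^ 3 ^ e) ^ (i - 1) ∧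
      Nonempty (Abelianization M ≃* Multiplicative (ZMod (3 ^ e) × ZMod 3)) := by
  obtain ⟨j, hj⟩ : ∃ j, j = i - 1 := ⟨_, rfl⟩
  have hfin : Finite (MM e he j) := Nat.finite_of_card_ne_zero (by rw [cardM]; positivity)
  have s2 : sgen (mx e he j) (iN e he j nY) 2 = iN e he j nC := by
    change comm' _ _ = _
    rw [comm_x, rel1]
  have s3 : sgen (mx e he j) (iN e he j nY) 3 = iN e he j (mkN 3 3 1 12) := by
    change comm' (sgen (mx e he j) (iN e he j nY) 2) _ = _
    rw [s2, comm_x, rel_s3]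
  have s4 : sgen (mx e he j) (iN e he j nY) 4 = iN e he j (mkN 3 3 1 9) := by
    change comm' (sgen (mx e he j) (iN e he j nY) 3) _ = _
    rw [s3, comm_x, rel_s4]
  have s5 : sgen (mx e he j) (iN e he j nY) 5 = iN e he j (mkN 0 0 0 9) := by
    change comm' (sgen (mx e he j) (iN e he j nY) 4) _ = _
    rw [s4, comm_x, rel_s5]
  have t2 : tgenB (mx e he j) (iN e he j nY) 2 = iN e he j nC := by
    change comm' _ _ = _
    rw [comm_x, rel1]
  have t3 : tgenB (mx e he j) (iN e he j nY) 3 = iN e he j (mkN 0 1 0 0) := by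
    change comm' (tgenB (mx e he j) (iN e he j nY) 2) _ = _
    rw [t2, comm_N, rel_t3]
  have t4 : tgenB (mx e he j) (iN e he j nY) 4 = iN e he j (mkN 0 0 1 0) := by
    change comm' (tgenB (mx e he j) (iN e he j nY) 3) _ = _
    rw [t3, comm_N, rel_t4]
  have t5 : tgenB (mx e he j) (iN e he j nY) 5 = iN e he j (mkN 0 (-3) 0 0) := by
    change comm' (tgenB (mx e he j) (iN e he j nY) 4) _ = _
    rw [t4, comm_N, rel_t5]
  have w1 : (mx e he j ^ 3 ^ e) ^ (i - 1) = iN e he j nW := by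
    rw [mx_pow, ← map_pow, ← hj, ← pow_mul]
    congr 1
    rcases hi with rfl | rfl <;> subst hj
    · simp
    · rw [show (3 - 1) * (3 - 1) = 3 + 1 by rfl, pow_succ, W_pow, one_mul]
  have w2 : (mx e he j ^ 3 ^ e) ^ (2 * (i - 1)) = iN e he j (nW ^ 2) := by
    rw [mul_comm, pow_mul, w1, map_pow]
  have w3 : (mx e he j ^ 3 ^ e) ^ 3 = 1 := by
    rw [mx_pow, ← map_pow, ← pow_mul, mul_comm, pow_mul, W_pow, one_pow, map_one]
  have oc : ∀ a b : MM e he j, Abelianization.of (comm' a b) = 1 := by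
    intro a b
    rw [comm', map_mul, map_mul, map_mul, map_inv, map_inv, mul_right_comm]
    simp
  have os : ∀ k, Abelianization.of (sgen (mx e he j) (iN e he j nY) (k + 3)) = 1 :=
    fun k => oc _ _
  have ot : ∀ k, Abelianization.of (tgenB (mx e he j) (iN e he j nY) (k + 3)) = 1 :=
    fun k => oc _ _
  have r1 : iN e he j nY ^ 3 = sgen (mx e he j) (iN e he j nY) 3 *
      sgen (mx e he j) (iN e he j nY) 4 ^ 2 := by
    rw [s3, s4, ← map_pow, ← map_pow, ← map_mul, R1]
  have r7 : tgenB (mx e he j) (iN e he j nY) 5 = sgen (mx e he j) (iN e he j nY) 5 *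
      (mx e he j ^ 3 ^ e) ^ (i - 1) := by
    rw [t5, s5, w1, ← map_mul, R7]
  have ab1 : (Abelianization.of (mx e he j)) ^ 3 ^ e = 1 := by
    have h := congrArg Abelianization.of r7
    have h' := congrArg Abelianization.of w3
    rw [map_mul, ot 2, os 2, one_mul, map_pow, map_pow] at h
    rw [map_pow, map_pow, map_one] at h'
    rcases hi with rfl | rfl
    · simpa using h.symm
    · generalize (Abelianization.of (mx e he j)) ^ 3 ^ e = u at h h'
      rw [pow_succ u 2, show u ^ 2 = 1 from h.symm, one_mul] at h'
      exact h'
  have ab2 : (Abelianization.of (iN e he j nY)) ^ 3 = 1 := by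
    have h := congrArg Abelianization.of r1
    rw [map_mul, map_pow, map_pow, os 0, os 1] at h
    simpa using h
  refine ⟨MM e he j, inferInstance, hfin, mx e he j, iN e he j nY, genM e he j, cardM e he j,
    metaM e he j, sigmaM e he j, w3, r1, ?_, ?_, ?_, ?_, ?_, r7, abM e he j ab1 ab2⟩
  · rw [s2, s4, t4, w1, ← map_pow, ← map_pow, ← map_mul, ← map_mul, R2]
  · rw [s3, s5, ← map_pow, R3]
  · rw [t3, s5, w2, ← map_pow, ← map_pow, ← map_mul, R4]
  · rw [comm_x3, s4, t4, s5, w2, ← map_pow, ← map_mul, ← map_mul, ← map_mul, R5]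
  · rw [s2, comm_x3, s5, R6]

theorem stmt16 (e i : ℕ) (he : 5 ≤ e) (hi : i = 2 ∨ i = 3) :
    ∃ (M : Type) (_ : Group M) (_ : Finite M) (x y : M),
      Subgroup.closure {x, y} = ⊤ ∧
      Nat.card M = 3 ^ (8 + e) ∧
      IsMetabelian M ∧
      IsSigmaGroup M ∧
      (x ^ 3 ^ e) ^ 3 = 1 ∧
      y ^ 3 = sgen x y 3 * sgen x y 4 ^ 2 ∧
      sgen x y 2 ^ 3 = sgen x y 4 * tgenB x y 4 ^ 2 * (x ^ 3 ^ e) ^ (i - 1) ∧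
      sgen x y 3 ^ 3 = sgen x y 5 ∧
      tgenB x y 3 ^ 3 = sgen x y 5 ^ 2 * (x ^ 3 ^ e) ^ (2 * (i - 1)) ∧
      comm' (x ^ 3) y = sgen x y 4 * tgenB x y 4 * sgen x y 5 ^ 2 * (x ^ 3 ^ e) ^ (2 * (i - 1)) ∧
      comm' (x ^ 3) (sgen x y 2) = sgen x y 5 ∧
      tgenB x y 5 = sgen x y 5 * (x ^ 3 ^ e) ^ (i - 1) ∧
      Nonempty (Abelianization M ≃* Multiplicative (ZMod (3 ^ e) × ZMod 3)) := by
  exact main_aux e i he hi
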